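/- Let (A, μ, R, α_A, β_A) be a Rota-Baxter BiHom-associative algebra of weight λ with α_A, β_A bijective, and let (M, R, T, α_M, β_M, α_A, β_A) be a Rota-Baxter paired left (A, μ, α_A, β_A)-module of weight λ with underlying action ▷. Define a♮b = R(a)b − α_A⁻¹β_A(b)·R(α_Aβ_A⁻¹(a)) − λ·α_A⁻¹β_A(b)·α_Aβ_A⁻¹(a), and a▷⋆m = R(a)▷m + a▷T(m) + λ·a▷m. Then (A, ♮, α_A, β_A) is a BiHom-pre-Lie algebra and (M, ▷⋆, α_M, β_M) is a left pre-Lie module over (A, ♮, α_A, β_A). -/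

import Mathlib

/-- `a ♮ b = R(a)b − α⁻¹β(b)·R(αβ⁻¹(a)) − λ·α⁻¹β(b)·αβ⁻¹(a)`. -/
def natOp {K A : Type*} [Field K] [NonUnitalNonAssocRing A] [Module K A]
    [SMulCommClass K A A] [IsScalarTower K A A]
    (α β : A ≃ₗ[K] A) (R : A →ₗ[K] A) (lam : K) (a b : A) : A :=
  R a * b - α.symm (β b) * R (α (β.symm a)) - lam • (α.symm (β b) * α (β.symm a))

/-- `a ▷⋆ m = R(a)▷m + a▷T(m) + λ·a▷m`. -/
def actStar {K A M : Type*} [Field K] [NonUnitalNonAssocRing A] [Module K A]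
    [SMulCommClass K A A] [IsScalarTower K A A] [AddCommGroup M] [Module K M]
    (act : A →ₗ[K] M →ₗ[K] M) (R : A →ₗ[K] A) (T : M →ₗ[K] M) (lam : K)
    (a : A) (m : M) : M :=
  act (R a) m + act a (T m) + lam • act a m

/-!
The product `a ⋆ b = R(a)b + aR(b) + λab` makes `A` a BiHom-associative algebra, and both `R` and
`R + λ` are multiplicative from `⋆` to the original product. Hence `▷⋆` is an associative action of
`(A, ⋆)`, and `(A, ⋆)` acts on `A` from the left by `R(a)b` and from the right by `b(R(a) + λa)`;
`♮` is the difference of these two actions, the right one twisted. The pre-Lie identity for an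
action depends on the product only through its commutator `β(a)α(b) - β(b)α(a)`. Associative
actions and differences of left and right actions satisfy it for `⋆`, and `♮` has the same
commutator as `⋆`.

Writing the arguments of `♮` as `β a` and `α b` eliminates the inverses:
`β a ♮ α b = R(β a)α(b) - β(b)R(α a) - λβ(b)α(a)`.
-/

section

variable {K A M : Type*} [CommRing K] [AddCommGroup A] [Module K A] [AddCommGroup M] [Module K M]

/-- An action of `A` on `M` compatible with the pairs of structure maps `(α, β)` and `(αM, βM)`,
with no associativity required. For `M = A` this says that `α` and `β` are commuting endomorphisms
of the algebra `A`. -/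
structure IsBiHomAction (α β : A →ₗ[K] A) (act : A →ₗ[K] M →ₗ[K] M) (αM βM : M →ₗ[K] M) :
    Prop where
  comm : ∀ m, αM (βM m) = βM (αM m)
  map_alpha : ∀ a m, αM (act a m) = act (α a) (αM m)
  map_beta : ∀ a m, βM (act a m) = act (β a) (βM m)

/-- A left module over the BiHom-associative algebra `(A, μ, α, β)`, whose own axioms are not part
of the structure. -/
structure IsBiHomModule (μ : A →ₗ[K] A →ₗ[K] A) (α β : A →ₗ[K] A)
    (act : A →ₗ[K] M →ₗ[K] M) (αM βM : M →ₗ[K] M) : Prop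
    extends IsBiHomAction α β act αM βM where
  assoc : ∀ a b m, act (α a) (act b m) = act (μ a b) (βM m)

/-- A BiHom-associative algebra, encoded as an algebra that is a left module over itself: the
axioms are the same. -/
abbrev IsBiHomAssociative (μ : A →ₗ[K] A →ₗ[K] A) (α β : A →ₗ[K] A) : Prop :=
  IsBiHomModule μ α β μ α β

/-- A bimodule over the BiHom-associative algebra `(A, μ, α, β)`, with left action `l` and right
action `r`; the axioms of the algebra are not part of the structure. -/
structure IsBiHomBimodule (μ : A →ₗ[K] A →ₗ[K] A) (α β : A →ₗ[K] A)
    (l : A →ₗ[K] M →ₗ[K] M) (r : M →ₗ[K] A →ₗ[K] M) (αM βM : M →ₗ[K] M) : Prop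
    extends IsBiHomModule μ α β l αM βM where
  map_alpha_right : ∀ m a, αM (r m a) = r (αM m) (α a)
  map_beta_right : ∀ m a, βM (r m a) = r (βM m) (β a)
  assoc_right : ∀ m a b, r (αM m) (μ a b) = r (r m a) (β b)
  assoc_middle : ∀ a m b, l (α a) (r m b) = r (l a m) (β b)

/-- A left pre-Lie module over the BiHom-pre-Lie algebra `(A, μ, α, β)`, whose own axioms are not
part of the structure. -/
structure IsBiHomPreLieModule (μ : A →ₗ[K] A →ₗ[K] A) (α β : A →ₗ[K] A)
    (act : A →ₗ[K] M →ₗ[K] M) (αM βM : M →ₗ[K] M) : Prop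
    extends IsBiHomAction α β act αM βM where
  left_symm : ∀ a b m,
    act (α (β a)) (act (α b) m) - act (μ (β a) (α b)) (βM m) =
      act (α (β b)) (act (α a) m) - act (μ (β b) (α a)) (βM m)

/-- A BiHom-pre-Lie algebra, encoded as an algebra that is a left pre-Lie module over itself: the
axioms are the same. -/
abbrev IsBiHomPreLie (μ : A →ₗ[K] A →ₗ[K] A) (α β : A →ₗ[K] A) : Prop :=
  IsBiHomPreLieModule μ α β μ α β

/-- The axioms relating the operators `R` and `T` of weight `lam` in a Rota-Baxter paired left
module. -/
structure IsRotaBaxterPair (α β : A →ₗ[K] A) (act : A →ₗ[K] M →ₗ[K] M) (αM βM : M →ₗ[K] M)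
    (R : A →ₗ[K] A) (T : M →ₗ[K] M) (lam : K) : Prop where
  left_alpha : ∀ a, R (α a) = α (R a)
  left_beta : ∀ a, R (β a) = β (R a)
  right_alpha : ∀ m, T (αM m) = αM (T m)
  right_beta : ∀ m, T (βM m) = βM (T m)
  act_eq : ∀ a m, act (R a) (T m) = T (act (R a) m) + T (act a (T m)) + lam • T (act a m)

/-- A Rota-Baxter operator of weight `lam` commuting with `α` and `β`, encoded as an operator that
is paired with itself for the regular action. -/
abbrev IsRotaBaxter (μ : A →ₗ[K] A →ₗ[K] A) (α β R : A →ₗ[K] A) (lam : K) : Prop :=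
  IsRotaBaxterPair α β μ α β R R lam

/-- The action `a ▷⋆ m = R(a) ▷ m + a ▷ T(m) + λ a ▷ m`. For the regular action and `T = R` it is
the product `⋆` of `A` induced by `R`. -/
def rotaBaxterAct (act : A →ₗ[K] M →ₗ[K] M) (R : A →ₗ[K] A) (T : M →ₗ[K] M) (lam : K) :
    A →ₗ[K] M →ₗ[K] M :=
  act ∘ₗ R + act.compl₂ T + lam • act

variable {μ ν : A →ₗ[K] A →ₗ[K] A} {α β R : A →ₗ[K] A} {lam : K}
variable {act l ρ : A →ₗ[K] M →ₗ[K] M} {r : M →ₗ[K] A →ₗ[K] M} {αM βM T : M →ₗ[K] M}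

theorem rotaBaxterAct_apply (a : A) (m : M) :
    rotaBaxterAct act R T lam a m = act (R a) m + act a (T m) + lam • act a m :=
  rfl

theorem IsBiHomModule.isBiHomPreLieModule (h : IsBiHomModule μ α β act αM βM) :
    IsBiHomPreLieModule μ α β act αM βM where
  toIsBiHomAction := h.toIsBiHomAction
  left_symm a b m := by rw [h.assoc, h.assoc, sub_self, sub_self]

theorem IsBiHomPreLieModule.of_commutator_eq (h : IsBiHomPreLieModule μ α β act αM βM)
    (hν : ∀ a b, ν (β a) (α b) - ν (β b) (α a) = μ (β a) (α b) - μ (β b) (α a)) :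
    IsBiHomPreLieModule ν α β act αM βM where
  toIsBiHomAction := h.toIsBiHomAction
  left_symm a b m := by
    have commutator_act : act (ν (β a) (α b)) (βM m) - act (ν (β b) (α a)) (βM m) =
        act (μ (β a) (α b)) (βM m) - act (μ (β b) (α a)) (βM m) := by
      simp only [← LinearMap.sub_apply, ← map_sub, hν]
    rw [sub_eq_sub_iff_sub_eq_sub, commutator_act, ← sub_eq_sub_iff_sub_eq_sub]
    exact h.left_symm a b m

theorem IsBiHomBimodule.isBiHomAction_sub (h : IsBiHomBimodule μ α β l r αM βM)
    (hαβ : ∀ a, α (β a) = β (α a)) (hβ : Function.Surjective β) (hαM : Function.Surjective αM)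
    (hρ : ∀ a m, ρ (β a) (αM m) = l (β a) (αM m) - r (βM m) (α a)) :
    IsBiHomAction α β ρ αM βM where
  comm := h.comm
  map_alpha a m := by
    obtain ⟨a, rfl⟩ := hβ a
    obtain ⟨m, rfl⟩ := hαM m
    rw [hρ, hαβ, hρ, map_sub, h.map_alpha, h.map_alpha_right, hαβ, h.comm]
  map_beta a m := by
    obtain ⟨a, rfl⟩ := hβ a
    obtain ⟨m, rfl⟩ := hαM m
    rw [hρ, ← h.comm, hρ, map_sub, h.map_beta, h.map_beta_right, hαβ, h.comm]

theorem IsBiHomBimodule.isBiHomPreLieModule_sub (h : IsBiHomBimodule μ α β l r αM βM)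
    (hμ : IsBiHomAction α β μ α β) (hβ : Function.Surjective β) (hαM : Function.Surjective αM)
    (hρ : ∀ a m, ρ (β a) (αM m) = l (β a) (αM m) - r (βM m) (α a)) :
    IsBiHomPreLieModule μ α β ρ αM βM where
  toIsBiHomAction := h.isBiHomAction_sub hμ.comm hβ hαM hρ
  left_symm a b m := by
    have hact := h.isBiHomAction_sub hμ.comm hβ hαM hρ
    obtain ⟨a, rfl⟩ := hβ a
    obtain ⟨b, rfl⟩ := hβ b
    obtain ⟨m, rfl⟩ := hαM m
    obtain ⟨m, rfl⟩ := hαM m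
    have act_act (a b : A) : ρ (α (β (β a))) (ρ (α (β b)) (αM (αM m))) =
        l (μ (β (β a)) (β (α b))) (βM (αM (αM m)))
          - r (l (β (β a)) (βM (αM m))) (β (α (α b)))
          - r (l (β (β b)) (βM (αM m))) (β (α (α a)))
          + r (βM (βM (αM m))) (μ (β (α b)) (α (α a))) := by
      rw [← hact.map_alpha, hρ, hμ.comm, hρ, map_sub, map_sub, map_sub, map_sub,
        LinearMap.sub_apply, h.map_alpha, h.map_alpha_right, h.map_beta, h.map_beta_right,
        ← hμ.comm (β a), h.assoc, h.assoc_middle]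
      simp only [hμ.comm, h.comm, ← h.assoc_right]
      abel
    have act_mul (a b : A) : ρ (μ (β (β a)) (α (β b))) (βM (αM (αM m))) =
        l (μ (β (β a)) (β (α b))) (βM (αM (αM m)))
          - r (βM (βM (αM m))) (μ (β (α a)) (α (α b))) := by
      rw [hμ.comm, ← hμ.map_beta, ← h.comm, hρ, hμ.map_alpha, hμ.map_beta, hμ.comm]
    rw [act_act, act_act, act_mul, act_mul]
    abel

theorem IsRotaBaxterPair.map_rotaBaxterAct (hT : IsRotaBaxterPair α β act αM βM R T lam)
    (a : A) (m : M) : T (rotaBaxterAct act R T lam a m) = act (R a) (T m) := by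
  rw [hT.act_eq, rotaBaxterAct_apply, map_add, map_add, map_smul]

theorem IsRotaBaxter.map_add_smul_rotaBaxterAct (hR : IsRotaBaxter μ α β R lam) (a b : A) :
    (R + lam • LinearMap.id : A →ₗ[K] A) (rotaBaxterAct μ R R lam a b) =
      μ ((R + lam • LinearMap.id : A →ₗ[K] A) a) ((R + lam • LinearMap.id : A →ₗ[K] A) b) := by
  rw [LinearMap.add_apply, hR.map_rotaBaxterAct]
  simp only [rotaBaxterAct_apply, LinearMap.add_apply, LinearMap.smul_apply, LinearMap.id_apply,
    map_add, map_smul]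
  module

theorem IsRotaBaxterPair.isBiHomAction_rotaBaxterAct
    (hT : IsRotaBaxterPair α β act αM βM R T lam) (hM : IsBiHomAction α β act αM βM) :
    IsBiHomAction α β (rotaBaxterAct act R T lam) αM βM where
  comm := hM.comm
  map_alpha a m := by
    simp only [rotaBaxterAct_apply, map_add, map_smul, hM.map_alpha, hT.left_alpha, hT.right_alpha]
  map_beta a m := by
    simp only [rotaBaxterAct_apply, map_add, map_smul, hM.map_beta, hT.left_beta, hT.right_beta]

theorem IsRotaBaxterPair.isBiHomModule_rotaBaxterAct
    (hT : IsRotaBaxterPair α β act αM βM R T lam) (hR : IsRotaBaxter μ α β R lam)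
    (hM : IsBiHomModule μ α β act αM βM) :
    IsBiHomModule (rotaBaxterAct μ R R lam) α β (rotaBaxterAct act R T lam) αM βM where
  toIsBiHomAction := hT.isBiHomAction_rotaBaxterAct hM.toIsBiHomAction
  assoc a b m := by
    rw [rotaBaxterAct_apply (α a), hT.map_rotaBaxterAct, rotaBaxterAct_apply _ (βM m),
      hR.map_rotaBaxterAct, hT.left_alpha, hT.right_beta]
    simp only [rotaBaxterAct_apply, map_add, map_smul, hM.assoc, LinearMap.add_apply,
      LinearMap.smul_apply]
    module

theorem IsRotaBaxter.isBiHomBimodule (hR : IsRotaBaxter μ α β R lam)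
    (hA : IsBiHomAssociative μ α β) :
    IsBiHomBimodule (rotaBaxterAct μ R R lam) α β (μ ∘ₗ R)
      (μ.compl₂ (R + lam • LinearMap.id)) α β where
  comm := hA.comm
  map_alpha a b := by simp only [LinearMap.comp_apply, hA.map_alpha, hR.left_alpha]
  map_beta a b := by simp only [LinearMap.comp_apply, hA.map_beta, hR.left_beta]
  assoc a b c := by
    simp only [LinearMap.comp_apply, hR.map_rotaBaxterAct, hR.left_alpha, hA.assoc]
  map_alpha_right b a := by simp [hA.map_alpha, hR.left_alpha]
  map_beta_right b a := by simp [hA.map_beta, hR.left_beta]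
  assoc_right c a b := by
    simp only [LinearMap.compl₂_apply, hR.map_add_smul_rotaBaxterAct, hA.assoc]
    simp [hR.left_beta]
  assoc_middle a c b := by simp [hA.assoc, hR.left_alpha, hR.left_beta]

theorem stmt19_general (hα : Function.Surjective α) (hβ : Function.Surjective β)
    (hA : IsBiHomAssociative μ α β) (hR : IsRotaBaxter μ α β R lam)
    (hM : IsBiHomModule μ α β act αM βM) (hT : IsRotaBaxterPair α β act αM βM R T lam)
    (hν : ∀ a b, ν (β a) (α b) =
      μ (R (β a)) (α b) - μ (β b) (R (α a)) - lam • μ (β b) (α a)) :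
    IsBiHomPreLie ν α β ∧ IsBiHomPreLieModule ν α β (rotaBaxterAct act R T lam) αM βM := by
  have commutator_eq (a b : A) : ν (β a) (α b) - ν (β b) (α a) =
      rotaBaxterAct μ R R lam (β a) (α b) - rotaBaxterAct μ R R lam (β b) (α a) := by
    rw [hν, hν, rotaBaxterAct_apply, rotaBaxterAct_apply]
    abel
  have preLie_star : IsBiHomPreLieModule (rotaBaxterAct μ R R lam) α β ν α β :=
    (hR.isBiHomBimodule hA).isBiHomPreLieModule_sub
      (hR.isBiHomAction_rotaBaxterAct hA.toIsBiHomAction) hβ hα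
      fun a b => by simp [hν, sub_sub]
  exact ⟨preLie_star.of_commutator_eq commutator_eq,
    (hT.isBiHomModule_rotaBaxterAct hR hM).isBiHomPreLieModule.of_commutator_eq commutator_eq⟩

end

section

variable {K A : Type*} [Field K] [NonUnitalNonAssocRing A] [Module K A]
  [SMulCommClass K A A] [IsScalarTower K A A]

/-- The product `♮` as a bilinear map. -/
def natBilin (α β : A ≃ₗ[K] A) (R : A →ₗ[K] A) (lam : K) : A →ₗ[K] A →ₗ[K] A :=
  LinearMap.mk₂ K (natOp α β R lam)
    (fun a a' b => by simp only [natOp, map_add, add_mul, mul_add]; module)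
    (fun c a b => by simp only [natOp, map_smul, smul_mul_assoc, mul_smul_comm]; module)
    (fun a b b' => by simp only [natOp, map_add, add_mul, mul_add]; module)
    (fun c a b => by simp only [natOp, map_smul, smul_mul_assoc, mul_smul_comm]; module)

theorem natOp_beta_alpha {α β : A ≃ₗ[K] A} (hαβ : ∀ a, α (β a) = β (α a)) (R : A →ₗ[K] A)
    (lam : K) (a b : A) :
    natOp α β R lam (β a) (α b) = R (β a) * α b - β b * R (α a) - lam • (β b * α a) := by
  simp only [natOp, ← hαβ, LinearEquiv.symm_apply_apply]

end

/-- Lemma 3.14 and Theorem 3.15: if `(A, μ, R, α_A, β_A)` is a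
Rota-Baxter BiHom-associative algebra of weight `λ` with `α_A, β_A` bijective and
`(M, R, T, α_M, β_M, α_A, β_A)` is a Rota-Baxter paired left module of weight `λ`,
then `a ♮ b = R(a)b − α⁻¹β(b)R(αβ⁻¹(a)) − λα⁻¹β(b)αβ⁻¹(a)` makes `(A, ♮, α_A, β_A)`
a BiHom-pre-Lie algebra and `a▷⋆m = R(a)▷m + a▷T(m) + λa▷m` makes
`(M, ▷⋆, α_M, β_M)` a left pre-Lie module over it. -/
theorem stmt19 {K A M : Type*} [Field K] [NonUnitalNonAssocRing A] [Module K A]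
    [SMulCommClass K A A] [IsScalarTower K A A] [AddCommGroup M] [Module K M]
    (α β : A ≃ₗ[K] A) (R : A →ₗ[K] A) (lam : K)
    (αM βM : M →ₗ[K] M) (act : A →ₗ[K] M →ₗ[K] M) (T : M →ₗ[K] M)
    -- BiHom-associative algebra axioms for (A, ·, α, β)
    (hαβ : ∀ a, α (β a) = β (α a))
    (hαmul : ∀ a b, α (a * b) = α a * α b)
    (hβmul : ∀ a b, β (a * b) = β a * β b)
    (hassoc : ∀ a b c, α a * (b * c) = (a * b) * β c)
    -- Rota-Baxter operator of weight λ commuting with α and β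
    (hRα : ∀ a, R (α a) = α (R a)) (hRβ : ∀ a, R (β a) = β (R a))
    (hRB : ∀ a b, R a * R b = R (R a * b) + R (a * R b) + lam • R (a * b))
    -- (M, ▷, αM, βM) is a left (A, μ, α, β)-module
    (hMcomm : ∀ m, αM (βM m) = βM (αM m))
    (hMα : ∀ a m, αM (act a m) = act (α a) (αM m))
    (hMβ : ∀ a m, βM (act a m) = act (β a) (βM m))
    (hMact : ∀ a b m, act (α a) (act b m) = act (a * b) (βM m))
    -- Rota-Baxter paired module structure of weight λ
    (hTα : ∀ m, T (αM m) = αM (T m)) (hTβ : ∀ m, T (βM m) = βM (T m))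
    (hpair : ∀ a m, act (R a) (T m) =
      T (act (R a) m) + T (act a (T m)) + lam • T (act a m)) :
    -- (A, ♮, α, β) is a BiHom-pre-Lie algebra
    ((∀ a b, α (natOp α β R lam a b) = natOp α β R lam (α a) (α b)) ∧
     (∀ a b, β (natOp α β R lam a b) = natOp α β R lam (β a) (β b)) ∧
     (∀ a b c,
       natOp α β R lam (α (β a)) (natOp α β R lam (α b) c) -
         natOp α β R lam (natOp α β R lam (β a) (α b)) (β c) =
       natOp α β R lam (α (β b)) (natOp α β R lam (α a) c) -
         natOp α β R lam (natOp α β R lam (β b) (α a)) (β c))) ∧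
    -- (M, ▷⋆, αM, βM) is a left pre-Lie module over (A, ♮, α, β)
    ((∀ m, αM (βM m) = βM (αM m)) ∧
     (∀ a m, αM (actStar act R T lam a m) = actStar act R T lam (α a) (αM m)) ∧
     (∀ a m, βM (actStar act R T lam a m) = actStar act R T lam (β a) (βM m)) ∧
     (∀ a b m,
       actStar act R T lam (α (β a)) (actStar act R T lam (α b) m) -
         actStar act R T lam (natOp α β R lam (β a) (α b)) (βM m) =
       actStar act R T lam (α (β b)) (actStar act R T lam (α a) m) -
         actStar act R T lam (natOp α β R lam (β b) (α a)) (βM m))) := by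
  have ⟨hA, hM⟩ := stmt19_general (μ := LinearMap.mul K A) (ν := natBilin α β R lam)
    α.surjective β.surjective ⟨⟨hαβ, hαmul, hβmul⟩, hassoc⟩ ⟨hRα, hRβ, hRα, hRβ, hRB⟩
    ⟨⟨hMcomm, hMα, hMβ⟩, hMact⟩ ⟨hRα, hRβ, hTα, hTβ, hpair⟩ (natOp_beta_alpha hαβ R lam)
  exact ⟨⟨hA.map_alpha, hA.map_beta, hA.left_symm⟩,
    hM.comm, hM.map_alpha, hM.map_beta, hM.left_symm⟩
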